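/- arXiv:1303.2299 — 2 statements merged into one kernel-verified Lean document; each statement's English description precedes it below -/
import Mathlib

section
/- Let T be a ℤ₊^k-action on a compact metric space X with generators {T_i : 1 ≤ i ≤ k}, and for an integer m > 1 let T^m denote the ℤ₊^k-action with generators {T_i^m : 1 ≤ i ≤ k}. Then h(T^m) ≤ m·h(T). -/
/-- The shift map on one-sided sequences. -/
def seqShift {X : Type*} : (ℕ → X) → (ℕ → X) := fun x n => x (n + 1)

/-- The orbit space `X_T` of the `ℤ₊^k`-action generated by `T 0, …, T (k-1)`. -/
def orbitSpace {X : Type*} {k : ℕ} (T : Fin k → X → X) : Set (ℕ → X) :=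
  {x | ∀ n : ℕ, ∃ i : Fin k, x (n + 1) = T i (x n)}

/-- Friedland's entropy of the `ℤ₊^k`-action generated by `T`. -/
noncomputable def friedlandEntropy {X : Type*} [UniformSpace X] {k : ℕ}
    (T : Fin k → X → X) : EReal :=
  Dynamics.coverEntropy seqShift (orbitSpace T)

/-!
Every orbit `y` of `T^m` is the sampling at the multiples of `m` of an orbit of `T`: between `y q`
and `y (q + 1) = (T i)^[m] (y q)` insert the points `(T i)^[r] (y q)`, `0 < r < m`. Sampling is
uniformly continuous and semiconjugates `σ^m` to `σ`, so `h(T^m) ≤ h(σ^m, X_T)`. Finally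
`h(σ^m, X_T) ≤ m * h(σ, X_T)`, since points whose `σ`-orbits stay close for `m * n` steps have
`σ^m`-orbits that stay close for `n` steps.
-/

open Dynamics ExpGrowth Function

section EntropyOfIterate

variable {Y : Type*} (S : Y → Y) (F : Set Y) (U : SetRel Y Y) {m : ℕ}

lemma dynEntourage_mul_subset_dynEntourage_iterate (hm : m ≠ 0) (n : ℕ) :
    dynEntourage S U (m * n) ⊆ dynEntourage S^[m] U n := by
  rintro ⟨x, y⟩ hxy
  rw [mem_dynEntourage] at hxy ⊢
  intro j hj
  rw [← iterate_mul]
  exact hxy (m * j) (Nat.mul_lt_mul_of_pos_left hj hm.pos)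

lemma coverMincard_iterate_le (hm : m ≠ 0) (n : ℕ) :
    coverMincard S^[m] F U n ≤ coverMincard S F U (m * n) :=
  biInf_mono fun _ hs ↦ hs.mono_entourage (dynEntourage_mul_subset_dynEntourage_iterate S U hm n)

lemma coverEntropyEntourage_iterate_le (hm : m ≠ 0) :
    coverEntropyEntourage S^[m] F U ≤ m * coverEntropyEntourage S F U := by
  have mincard_mono : Monotone fun n ↦ (coverMincard S F U n).toENNReal :=
    ENat.toENNReal_mono.comp (coverMincard_monotone_time S F U)
  calc coverEntropyEntourage S^[m] F U
      ≤ expGrowthSup fun n ↦ (coverMincard S F U (m * n)).toENNReal :=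
        expGrowthSup_monotone fun n ↦ ENat.toENNReal_mono (coverMincard_iterate_le S F U hm n)
    _ = m * coverEntropyEntourage S F U := mincard_mono.expGrowthSup_comp_mul hm

lemma coverEntropy_iterate_le [UniformSpace Y] (hm : m ≠ 0) :
    coverEntropy S^[m] F ≤ m * coverEntropy S F :=
  iSup₂_le fun U hU ↦ (coverEntropyEntourage_iterate_le S F U hm).trans <|
    mul_le_mul_of_nonneg_left (coverEntropyEntourage_le_coverEntropy S F hU) (Nat.cast_nonneg' m)

end EntropyOfIterate

section Sampling

variable {X : Type*}

/-- The subsequence `x 0, x m, x (2 * m), …` of `x`, which relates the orbits of an action to those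
of its `m`-th power. -/
def seqSample (m : ℕ) (x : ℕ → X) : ℕ → X := fun n ↦ x (m * n)

lemma seqShift_iterate_apply (m : ℕ) (x : ℕ → X) (n : ℕ) : seqShift^[m] x n = x (n + m) := by
  induction m generalizing x with
  | zero => rfl
  | succ m ih => rw [iterate_succ_apply, ih, seqShift, add_assoc]

lemma semiconj_seqSample (m : ℕ) : Semiconj (seqSample (X := X) m) seqShift^[m] seqShift := by
  intro x
  funext n
  rw [seqSample, seqShift_iterate_apply, seqShift, seqSample, mul_add_one]

lemma uniformContinuous_seqSample [UniformSpace X] (m : ℕ) :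
    UniformContinuous (seqSample (X := X) m) :=
  Pi.uniformContinuous_precomp (m * ·)

end Sampling

section Interpolation

variable {X : Type*} (f : ℕ → X → X) {m : ℕ} (y : ℕ → X)

/-- The sequence whose `q`-th block of length `m` is `y q, f q (y q), …, (f q)^[m - 1] (y q)`. It
fills in the points skipped by an orbit `y` of the `m`-th power of an action when `f q` is the
generator whose `m`-th iterate is applied at time `q`. -/
def blockInterpolation (m : ℕ) : ℕ → X := fun n ↦ (f (n / m))^[n % m] (y (n / m))

lemma blockInterpolation_mul_add_of_lt (q : ℕ) {r : ℕ} (hr : r < m) :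
    blockInterpolation f y m (m * q + r) = (f q)^[r] (y q) := by
  have hdiv : (m * q + r) / m = q := by
    rw [Nat.mul_add_div (by omega), Nat.div_eq_of_lt hr, add_zero]
  rw [blockInterpolation, hdiv, Nat.mul_add_mod, Nat.mod_eq_of_lt hr]

lemma seqSample_blockInterpolation (hm : m ≠ 0) : seqSample m (blockInterpolation f y m) = y :=
  funext fun q ↦ blockInterpolation_mul_add_of_lt f y q hm.pos

variable {f y}

lemma blockInterpolation_mul_add_of_le (hm : m ≠ 0) (hy : ∀ q, y (q + 1) = (f q)^[m] (y q))
    (q : ℕ) {r : ℕ} (hr : r ≤ m) :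
    blockInterpolation f y m (m * q + r) = (f q)^[r] (y q) := by
  rcases hr.lt_or_eq with hlt | rfl
  · exact blockInterpolation_mul_add_of_lt f y q hlt
  · rw [← hy, ← mul_add_one]
    exact blockInterpolation_mul_add_of_lt f y (q + 1) hm.pos

lemma blockInterpolation_succ (hm : m ≠ 0) (hy : ∀ q, y (q + 1) = (f q)^[m] (y q)) (n : ℕ) :
    blockInterpolation f y m (n + 1) = f (n / m) (blockInterpolation f y m n) := by
  have hlt : n % m < m := Nat.mod_lt n hm.pos
  calc blockInterpolation f y m (n + 1)
      = blockInterpolation f y m (m * (n / m) + (n % m + 1)) := by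
        rw [← add_assoc, Nat.div_add_mod]
    _ = (f (n / m))^[n % m + 1] (y (n / m)) := blockInterpolation_mul_add_of_le hm hy _ hlt
    _ = f (n / m) (blockInterpolation f y m n) := iterate_succ_apply' _ _ _

end Interpolation

lemma orbitSpace_iterate_subset_image_seqSample {X : Type*} {k : ℕ} (T : Fin k → X → X) {m : ℕ}
    (hm : m ≠ 0) : orbitSpace (fun i ↦ (T i)^[m]) ⊆ seqSample m '' orbitSpace T := by
  intro y hy
  choose i hi using hy
  exact ⟨blockInterpolation (fun q ↦ T (i q)) y m,
    fun n ↦ ⟨i (n / m), blockInterpolation_succ hm hi n⟩, seqSample_blockInterpolation _ y hm⟩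

theorem friedlandEntropy_pow_le_general {X : Type*} [UniformSpace X] {k : ℕ} (T : Fin k → X → X)
    {m : ℕ} (hm : m ≠ 0) :
    friedlandEntropy (fun i ↦ (T i)^[m]) ≤ (m : EReal) * friedlandEntropy T :=
  calc coverEntropy seqShift (orbitSpace fun i ↦ (T i)^[m])
      ≤ coverEntropy seqShift (seqSample m '' orbitSpace T) :=
        coverEntropy_monotone _ (orbitSpace_iterate_subset_image_seqSample T hm)
    _ ≤ coverEntropy seqShift^[m] (orbitSpace T) :=
        coverEntropy_image_le_of_uniformContinuous (semiconj_seqSample m)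
          (uniformContinuous_seqSample m) _
    _ ≤ m * coverEntropy seqShift (orbitSpace T) := coverEntropy_iterate_le _ _ hm

/-- for `m > 1`, the `ℤ₊^k`-action `T^m` generated by the `m`-th iterates
of the generators of `T` satisfies `h(T^m) ≤ m · h(T)`. -/
theorem friedlandEntropy_pow_le {X : Type*} [MetricSpace X] [CompactSpace X] {k : ℕ}
    (T : Fin k → X → X) (hT : ∀ i, Continuous (T i)) (m : ℕ) (hm : 1 < m) :
    friedlandEntropy (fun i => (T i)^[m]) ≤ (m : EReal) * friedlandEntropy T :=
  friedlandEntropy_pow_le_general T (Nat.ne_zero_of_lt hm)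
end

section
/- Let T₁,…,T_k be continuous self-maps of a compact metric space X with finite ball dimension D(X), each T_i Lipschitz with Lipschitz constant L(T_i), and set L = max_{1≤i≤k} max{1, L(T_i)}. For every ω = (i_n)_{n≥0} ∈ Σ_k, the Bowen topological entropy of the skew product σ̃ on the fiber Y_ω = {ω} × X satisfies h(σ̃, Y_ω) ≤ D(X)·log L. -/
/-!
On a fixed fiber the base coordinates of two orbits agree at all times, so the orbits separate only
in `X`, and by a factor of at most `Λ ^ j` after `j` steps if every map applied along `ω` is
`Λ`-Lipschitz. Hence a cover of `X` by balls of radius `δ / Λ ^ n` gives an `n`-step dynamical cover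
of the fiber at scale `δ`. If `Λ > 1`, these radii tend to `0` and
`log b(δ / Λ ^ n) / n = (log b(δ / Λ ^ n) / |log (δ / Λ ^ n)|) * (|log (δ / Λ ^ n)| / n)`, where the
first factor has limsup at most `D(X)` and the second one tends to `log Λ`. If `Λ = 1`, the radii
do not shrink, but then the number of balls does not depend on `n`.
-/

open Filter

/-- The discrete uniformity on `Fin k` (inducing the discrete topology). -/
instance (k : ℕ) : UniformSpace (Fin k) := ⊥

/-- The skew product `σ̃` on `Σ_k × X` over the full shift on `Σ_k = {1,…,k}^{ℤ₊}`,
whose fiber maps are the generators `T i`. -/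
def skewProd {X : Type*} {k : ℕ} (T : Fin k → X → X) :
    (ℕ → Fin k) × X → (ℕ → Fin k) × X :=
  fun p => (seqShift p.1, T (p.1 0) p.2)

/-- `b(ε)`: the minimal number of `ε`-balls needed to cover `X`. -/
noncomputable def ballCoverNum (X : Type*) [MetricSpace X] (ε : ℝ) : ℕ :=
  sInf {m : ℕ | ∃ s : Finset X, s.card = m ∧ (⋃ x ∈ s, Metric.ball x ε) = Set.univ}

/-- The ball dimension `D(X) = limsup_{ε→0⁺} log b(ε) / |log ε| ∈ ℝ ∪ {∞}`. -/
noncomputable def ballDim (X : Type*) [MetricSpace X] : EReal :=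
  limsup (fun ε : ℝ => ((Real.log (ballCoverNum X ε) / |Real.log ε| : ℝ) : EReal))
    (nhdsWithin 0 (Set.Ioi 0))

open Topology Uniformity
open scoped ENNReal NNReal

section BallDimension

variable {X : Type*} [MetricSpace X]

lemma exists_card_eq_ballCoverNum (hX : TotallyBounded (Set.univ : Set X)) {ε : ℝ} (hε : 0 < ε) :
    ∃ s : Finset X, s.card = ballCoverNum X ε ∧ (⋃ x ∈ s, Metric.ball x ε) = Set.univ := by
  obtain ⟨t, ht, hcover⟩ := Metric.totallyBounded_iff.1 hX ε hε
  lift t to Finset X using ht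
  exact Nat.sInf_mem (s := {m | ∃ s : Finset X, s.card = m ∧ (⋃ x ∈ s, Metric.ball x ε) = Set.univ})
    ⟨t.card, t, rfl, Set.univ_subset_iff.1 hcover⟩

variable (X) in
lemma ballDim_nonneg : 0 ≤ ballDim X :=
  le_limsup_of_frequently_le <| Frequently.of_forall fun ε ↦ by
    exact_mod_cast div_nonneg (Real.log_natCast_nonneg _) (abs_nonneg (Real.log ε))

-- Strict for `m = 0`, where the left side is `⊥` and the right side is the junk value `0`.
lemma ennrealLog_natCast_le (m : ℕ) : ENNReal.log m ≤ (Real.log m : EReal) := by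
  rcases m.eq_zero_or_pos with rfl | hm
  · simp
  · rw [← ENNReal.ofReal_natCast, ENNReal.log_ofReal_of_pos (by exact_mod_cast hm)]

lemma expGrowthSup_ballCoverNum_le {r : ℕ → ℝ} {ℓ : ℝ} (hℓ : 0 < ℓ)
    (hr : Tendsto r atTop (𝓝[>] 0))
    (hlog : Tendsto (fun n : ℕ ↦ |Real.log (r n)| / n) atTop (𝓝 ℓ)) :
    ExpGrowth.expGrowthSup (fun n ↦ (ballCoverNum X (r n) : ℝ≥0∞)) ≤ ballDim X * ℓ := by
  let ratio (ε : ℝ) : EReal := ((Real.log (ballCoverNum X ε) / |Real.log ε| : ℝ) : EReal)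
  let rate (n : ℕ) : EReal := ((|Real.log (r n)| / n : ℝ) : EReal)
  have ratio_nonneg (ε : ℝ) : 0 ≤ ratio ε :=
    EReal.coe_nonneg.2 (div_nonneg (Real.log_natCast_nonneg _) (abs_nonneg _))
  have rate_nonneg (n : ℕ) : 0 ≤ rate n := EReal.coe_nonneg.2 (by positivity)
  have limsup_rate : limsup rate atTop = ℓ := (EReal.tendsto_coe.2 hlog).limsup_eq
  have limsup_ratio : limsup (ratio ∘ r) atTop ≤ ballDim X := limsup_le_limsup_of_le hr
  have log_div_le : ∀ᶠ n in atTop,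
      ENNReal.log (ballCoverNum X (r n)) / (n : EReal) ≤ ratio (r n) * rate n := by
    filter_upwards [hr (Ioo_mem_nhdsGT one_pos)] with n hrn
    have hlog_ne : |Real.log (r n)| ≠ 0 := abs_ne_zero.2 (Real.log_neg hrn.1 hrn.2).ne
    calc ENNReal.log (ballCoverNum X (r n)) / (n : EReal)
        ≤ (Real.log (ballCoverNum X (r n)) : EReal) / (n : EReal) :=
          EReal.monotone_div_right_of_nonneg n.cast_nonneg' (ennrealLog_natCast_le _)
      _ = ((Real.log (ballCoverNum X (r n)) / n : ℝ) : EReal) := by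
          rw [EReal.coe_div, EReal.coe_natCast]
      _ = ratio (r n) * rate n := by
          rw [← EReal.coe_mul, div_mul_div_cancel₀ hlog_ne]
  calc ExpGrowth.expGrowthSup (fun n ↦ (ballCoverNum X (r n) : ℝ≥0∞))
      ≤ limsup ((ratio ∘ r) * rate) atTop := limsup_le_limsup log_div_le
    _ ≤ limsup (ratio ∘ r) atTop * limsup rate atTop :=
        EReal.limsup_mul_le (Frequently.of_forall fun n ↦ ratio_nonneg (r n))
          (Eventually.of_forall rate_nonneg)
          (.inr (limsup_rate ▸ EReal.coe_ne_top ℓ))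
          (.inr (limsup_rate ▸ EReal.coe_ne_zero.2 hℓ.ne'))
    _ ≤ ballDim X * ℓ := by
        rw [limsup_rate]
        exact mul_le_mul_of_nonneg_right limsup_ratio (EReal.coe_nonneg.2 hℓ.le)

lemma tendsto_div_pow_nhdsGT_zero {δ Λ : ℝ} (hδ : 0 < δ) (hΛ : 1 < Λ) :
    Tendsto (fun n : ℕ ↦ δ / Λ ^ n) atTop (𝓝[>] 0) :=
  tendsto_nhdsWithin_iff.2 ⟨(tendsto_pow_atTop_atTop_of_one_lt hΛ).const_div_atTop δ,
    Eventually.of_forall fun n ↦ Set.mem_Ioi.2 (by positivity)⟩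

lemma tendsto_abs_log_div_pow_div {δ Λ : ℝ} (hδ : δ ≠ 0) (hΛ : 1 ≤ Λ) :
    Tendsto (fun n : ℕ ↦ |Real.log (δ / Λ ^ n)| / n) atTop (𝓝 (Real.log Λ)) := by
  have hlim : Tendsto (fun n : ℕ ↦ |Real.log δ / n - Real.log Λ|) atTop (𝓝 (Real.log Λ)) := by
    simpa [abs_of_nonneg (Real.log_nonneg hΛ)] using
      ((tendsto_const_div_atTop_nhds_zero_nat (Real.log δ)).sub_const (Real.log Λ)).abs
  refine hlim.congr' ?_
  filter_upwards [eventually_gt_atTop 0] with n hn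
  have hn' : (0 : ℝ) < n := Nat.cast_pos.2 hn
  rw [Real.log_div hδ (by positivity), Real.log_pow, ← abs_of_pos hn', ← abs_div, abs_of_pos hn']
  congr 1
  field_simp

lemma expGrowthSup_ballCoverNum_div_pow_le {δ Λ : ℝ} (hδ : 0 < δ) (hΛ : 1 ≤ Λ) :
    ExpGrowth.expGrowthSup (fun n ↦ (ballCoverNum X (δ / Λ ^ n) : ℝ≥0∞)) ≤
      ballDim X * Real.log Λ := by
  rcases hΛ.eq_or_lt with rfl | hΛ'
  · calc ExpGrowth.expGrowthSup (fun n ↦ (ballCoverNum X (δ / 1 ^ n) : ℝ≥0∞))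
        ≤ ExpGrowth.expGrowthSup (fun _ ↦ 1) :=
          ExpGrowth.expGrowthSup_le_of_eventually_le (ENNReal.natCast_ne_top (ballCoverNum X δ))
            (Eventually.of_forall fun n ↦ by simp)
      _ = ballDim X * Real.log 1 := by
          simp [ExpGrowth.expGrowthSup_const one_ne_zero ENNReal.one_ne_top]
  · exact expGrowthSup_ballCoverNum_le (Real.log_pos hΛ') (tendsto_div_pow_nhdsGT_zero hδ hΛ')
      (tendsto_abs_log_div_pow_div hδ.ne' hΛ)

end BallDimension

section FiberIterate

variable {ι X : Type*}

/-- The composition `T (ω (n - 1)) ∘ ⋯ ∘ T (ω 0)`, by which the `n`-th iterate of the skew product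
acts on the fiber over `ω`. -/
def fiberIterate (T : ι → X → X) (ω : ℕ → ι) : ℕ → X → X
  | 0 => id
  | n + 1 => T (ω n) ∘ fiberIterate T ω n

lemma iterate_seqShift_apply (ω : ℕ → ι) (n m : ℕ) : seqShift^[n] ω m = ω (m + n) := by
  induction n generalizing m with
  | zero => rfl
  | succ n ih =>
    rw [Function.iterate_succ_apply', seqShift, ih, Nat.add_right_comm, Nat.add_assoc]

lemma iterate_skewProd_apply {k : ℕ} (T : Fin k → X → X) (n : ℕ) (ω : ℕ → Fin k) (x : X) :
    (skewProd T)^[n] (ω, x) = (seqShift^[n] ω, fiberIterate T ω n x) := by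
  induction n with
  | zero => rfl
  | succ n ih =>
    simp only [Function.iterate_succ_apply', ih, skewProd, iterate_seqShift_apply, zero_add,
      fiberIterate, Function.comp_apply]

lemma lipschitzWith_fiberIterate [PseudoEMetricSpace X] {T : ι → X → X} {ω : ℕ → ι} {Λ : ℝ≥0}
    (hT : ∀ n, LipschitzWith Λ (T (ω n))) (n : ℕ) :
    LipschitzWith (Λ ^ n) (fiberIterate T ω n) := by
  induction n with
  | zero => simpa only [pow_zero, fiberIterate] using LipschitzWith.id
  | succ n ih => simpa only [pow_succ', fiberIterate] using (hT n).comp ih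

end FiberIterate

lemma exists_pos_forall_prodMk_mem {α β : Type*} [UniformSpace α] [PseudoMetricSpace β]
    {U : SetRel (α × β) (α × β)} (hU : U ∈ 𝓤 (α × β)) :
    ∃ δ > 0, ∀ (a : α) (x y : β), dist x y < δ → ((a, x), (a, y)) ∈ U := by
  obtain ⟨V, hV, W, hW, hVW⟩ := entourageProd_subset hU
  obtain ⟨δ, hδ, hδW⟩ := Metric.mem_uniformity_dist.1 hW
  exact ⟨δ, hδ, fun a x y hxy ↦ hVW ⟨refl_mem_uniformity hV, hδW hxy⟩⟩

section SkewProduct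

variable {X : Type*} {k : ℕ} {T : Fin k → X → X} {ω : ℕ → Fin k} {Λ : ℝ≥0}
  {U : SetRel ((ℕ → Fin k) × X) ((ℕ → Fin k) × X)} {δ : ℝ}

lemma prodMk_mem_dynEntourage_skewProd [PseudoMetricSpace X] (hΛ : 1 ≤ Λ)
    (hT : ∀ n, LipschitzWith Λ (T (ω n)))
    (hU : ∀ η x y, dist x y < δ → ((η, x), (η, y)) ∈ U) {n : ℕ} {x y : X}
    (hxy : dist x y < δ / Λ ^ n) :
    ((ω, x), (ω, y)) ∈ Dynamics.dynEntourage (skewProd T) U n := by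
  refine Dynamics.mem_dynEntourage.2 fun j hj ↦ ?_
  rw [iterate_skewProd_apply, iterate_skewProd_apply]
  refine hU _ _ _ ?_
  calc dist (fiberIterate T ω j x) (fiberIterate T ω j y)
      ≤ Λ ^ j * dist x y := by
        exact_mod_cast (lipschitzWith_fiberIterate hT j).dist_le_mul x y
    _ ≤ Λ ^ n * dist x y := by gcongr
    _ < δ := by rwa [mul_comm, ← lt_div_iff₀ (by positivity)]

lemma coverMincard_skewProd_fiber_le [MetricSpace X] (hX : TotallyBounded (Set.univ : Set X))
    (hΛ : 1 ≤ Λ) (hT : ∀ n, LipschitzWith Λ (T (ω n))) (hδ : 0 < δ)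
    (hU : ∀ η x y, dist x y < δ → ((η, x), (η, y)) ∈ U) (n : ℕ) :
    Dynamics.coverMincard (skewProd T) ({ω} ×ˢ (Set.univ : Set X)) U n ≤
      ballCoverNum X (δ / Λ ^ n) := by
  classical
  have hradius : 0 < δ / (Λ : ℝ) ^ n :=
    div_pos hδ (pow_pos (NNReal.coe_pos.2 (one_pos.trans_le hΛ)) n)
  obtain ⟨s, hcard, hcover⟩ := exists_card_eq_ballCoverNum hX hradius
  have hdyn : Dynamics.IsDynCoverOf (skewProd T) ({ω} ×ˢ Set.univ) U n
      (s.image (Prod.mk ω) : Finset ((ℕ → Fin k) × X)) := by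
    rintro ⟨_, x⟩ ⟨rfl, -⟩
    obtain ⟨y, hy, hxy⟩ := Set.mem_iUnion₂.1 (hcover ▸ Set.mem_univ x)
    exact ⟨(_, y), Finset.mem_image_of_mem _ hy, prodMk_mem_dynEntourage_skewProd hΛ hT hU hxy⟩
  calc Dynamics.coverMincard (skewProd T) ({ω} ×ˢ (Set.univ : Set X)) U n
      ≤ (s.image (Prod.mk ω)).card := hdyn.coverMincard_le_card
    _ ≤ s.card := Nat.cast_le.2 Finset.card_image_le
    _ = ballCoverNum X (δ / Λ ^ n) := by rw [hcard]

theorem coverEntropy_skewProd_fiber_le_general [MetricSpace X]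
    (hX : TotallyBounded (Set.univ : Set X)) (hΛ : 1 ≤ Λ)
    (hT : ∀ n, LipschitzWith Λ (T (ω n))) :
    Dynamics.coverEntropy (skewProd T) ({ω} ×ˢ (Set.univ : Set X)) ≤
      ballDim X * Real.log Λ := by
  refine iSup₂_le fun U hU ↦ ?_
  obtain ⟨δ, hδ, hδU⟩ := exists_pos_forall_prodMk_mem hU
  calc Dynamics.coverEntropyEntourage (skewProd T) ({ω} ×ˢ Set.univ) U
      ≤ ExpGrowth.expGrowthSup (fun n ↦ (ballCoverNum X (δ / Λ ^ n) : ℝ≥0∞)) :=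
        ExpGrowth.expGrowthSup_monotone fun n ↦ by
          simpa only [ENat.toENNReal_coe] using
            ENat.toENNReal_mono (coverMincard_skewProd_fiber_le hX hΛ hT hδ hδU n)
    _ ≤ ballDim X * Real.log Λ := expGrowthSup_ballCoverNum_div_pow_le hδ hΛ

end SkewProduct

/-- if `X` has finite ball dimension and each `T i` is Lipschitz with
constant `L i`, with `L = maxᵢ max{1, L i}`, then the Bowen entropy of the skew product
`σ̃` on every fiber `Y_ω = {ω} × X` is at most `D(X) · log L`. -/
theorem coverEntropy_skewProd_fiber_le {X : Type*} [MetricSpace X] [CompactSpace X] {k : ℕ}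
    (hk : 0 < k) (T : Fin k → X → X) (L : Fin k → NNReal) (hL : ∀ i, LipschitzWith (L i) (T i))
    (hD : ballDim X ≠ ⊤) (ω : ℕ → Fin k) :
    Dynamics.coverEntropy (skewProd T) ({ω} ×ˢ (Set.univ : Set X)) ≤
      (((ballDim X).toReal * Real.log (⨆ i : Fin k, max 1 (L i : ℝ)) : ℝ) : EReal) := by
  have le_sup (i : Fin k) : max 1 (L i) ≤ ⨆ i, max 1 (L i) :=
    le_ciSup (f := fun i ↦ max 1 (L i)) (Set.finite_range _).bddAbove i
  have hD_bot : ballDim X ≠ ⊥ := (EReal.bot_lt_zero.trans_le (ballDim_nonneg X)).ne'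
  simpa only [NNReal.coe_iSup, NNReal.coe_max, NNReal.coe_one, EReal.coe_mul,
    EReal.coe_toReal hD hD_bot] using
    coverEntropy_skewProd_fiber_le_general isCompact_univ.totallyBounded
      ((le_max_left _ _).trans (le_sup ⟨0, hk⟩))
      fun n ↦ (hL (ω n)).weaken ((le_max_right _ _).trans (le_sup (ω n)))
end
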